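/- Let λ ∈ ℝ and let φ be a Dirichlet eigenfunction of 𝔏 for λ. Then there exist real numbers 0 < a < b < π and a Lipschitz function p : [0,π] → ℝ such that: p is not identically zero on (a,b); the product pφ is constant on [a,b] (equivalently (pφ)' = 0 on (a,b)); ∫_0^a (pφ)'φ dx = 0; and ∫_b^π (pφ)'φ dx = 0. -/

import Mathlib

lemma aux_int (φ p : ℝ → ℝ) (hφ : ContDiff ℝ 2 φ) (u v s : ℝ) (huv : u ≤ v)
    (hp : ∀ x ∈ Set.Ioo u v, p x = 4 / s - 3 * φ x / s ^ 2) :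
    IntervalIntegrable (fun x => deriv (fun y => p y * φ y) x * φ x)
        MeasureTheory.volume u v ∧
      (∫ x in u..v, deriv (fun y => p y * φ y) x * φ x) =
        (2 * φ v ^ 2 / s - 2 * φ v ^ 3 / s ^ 2) - (2 * φ u ^ 2 / s - 2 * φ u ^ 3 / s ^ 2) := by
  have hd : Differentiable ℝ φ := hφ.differentiable (by norm_num)
  have hc : Continuous φ := hφ.continuous
  have hc' : Continuous (deriv φ) := hφ.continuous_deriv (by norm_num)
  have key : ∀ x ∈ Set.Ioo u v, (4 / s * deriv φ x - 6 * φ x * deriv φ x / s ^ 2) * φ x =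
      deriv (fun y => p y * φ y) x * φ x := by
    intro x hx
    have h1 : (fun y => p y * φ y) =ᶠ[nhds x] fun y => (4 / s - 3 * φ y / s ^ 2) * φ y := by
      filter_upwards [isOpen_Ioo.mem_nhds hx] with y hy
      rw [hp y hy]
    have h0 := (hd x).hasDerivAt
    have h2 := ((((h0.const_mul 3).div_const (s ^ 2)).const_sub (4 / s)).mul h0).congr_of_eventuallyEq h1
    rw [h2.deriv]
    ring
  have hcont : Continuous (fun x => (4 / s * deriv φ x - 6 * φ x * deriv φ x / s ^ 2) * φ x) := by
    fun_prop
  have hae : ∀ᵐ x ∂(MeasureTheory.volume.restrict (Set.uIoc u v)),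
      (4 / s * deriv φ x - 6 * φ x * deriv φ x / s ^ 2) * φ x =
      deriv (fun y => p y * φ y) x * φ x := by
    rw [Set.uIoc_of_le huv, ← MeasureTheory.restrict_Ioo_eq_restrict_Ioc]
    exact MeasureTheory.ae_restrict_of_forall_mem measurableSet_Ioo key
  refine ⟨(hcont.intervalIntegrable u v).congr_ae hae, ?_⟩
  rw [← intervalIntegral.integral_congr_ae_restrict hae]
  rw [intervalIntegral.integral_eq_sub_of_hasDerivAt
    (f := fun x => 2 * φ x ^ 2 / s - 2 * φ x ^ 3 / s ^ 2) _ (hcont.intervalIntegrable u v)]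
  intro x _
  have h0 := (hd x).hasDerivAt
  have h2 := (((h0.pow 2).const_mul 2).div_const s).sub
    (((h0.pow 3).const_mul 2).div_const (s ^ 2))
  convert h2 using 1
  · rfl
  · push_cast
    norm_num
    ring

lemma aux_lip (f : ℝ → ℝ) (u v : ℝ) (hf : ContDiffOn ℝ 1 f (Set.Icc u v))
    (g : ℝ → ℝ) (hg : LipschitzWith 1 g) (S : Set ℝ) (hm : Set.MapsTo g S (Set.Icc u v)) :
    ∃ K : NNReal, LipschitzOnWith K (fun x => f (g x)) S := by
  obtain ⟨K, hK⟩ := hf.exists_lipschitzOnWith (by norm_num) (convex_Icc u v) isCompact_Icc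
  exact ⟨_, hK.comp (hg.lipschitzOnWith (s := S)) hm⟩


/-- The Sturm–Liouville operator `𝔏 u = -(γ u')' + γ₀ u`. -/
noncomputable def SL (γ γ₀ u : ℝ → ℝ) : ℝ → ℝ :=
  fun x => -(deriv (fun y => γ y * deriv u y) x) + γ₀ x * u x

/-- A Dirichlet eigenfunction of `𝔏` for the eigenvalue `lam`:
a nonzero C² function `φ` with `𝔏 φ = lam φ` on `[0, π]` and `φ 0 = φ π = 0`. -/
def IsDirichletEF (γ γ₀ : ℝ → ℝ) (lam : ℝ) (φ : ℝ → ℝ) : Prop :=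
  ContDiff ℝ 2 φ ∧ (∃ x ∈ Set.Icc (0:ℝ) Real.pi, φ x ≠ 0) ∧
  (∀ x ∈ Set.Icc (0:ℝ) Real.pi, SL γ γ₀ φ x = lam * φ x) ∧
  φ 0 = 0 ∧ φ Real.pi = 0

theorem stmt9 (γ γ₀ : ℝ → ℝ)
    (hγ : ContDiff ℝ 1 γ) (hγpos : ∀ x ∈ Set.Icc (0:ℝ) Real.pi, 0 < γ x)
    (hγ₀ : ContinuousOn γ₀ (Set.Icc 0 Real.pi))
    (lam : ℝ) (φ : ℝ → ℝ) (hφ : IsDirichletEF γ γ₀ lam φ) :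
    ∃ (a b : ℝ) (p : ℝ → ℝ), 0 < a ∧ a < b ∧ b < Real.pi ∧
      (∃ K : NNReal, LipschitzOnWith K p (Set.Icc 0 Real.pi)) ∧
      (∃ x ∈ Set.Ioo a b, p x ≠ 0) ∧
      (∃ c : ℝ, ∀ x ∈ Set.Icc a b, p x * φ x = c) ∧
      IntervalIntegrable (fun x => deriv (fun y => p y * φ y) x * φ x)
        MeasureTheory.volume 0 a ∧
      (∫ x in (0:ℝ)..a, deriv (fun y => p y * φ y) x * φ x) = 0 ∧
      IntervalIntegrable (fun x => deriv (fun y => p y * φ y) x * φ x)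
        MeasureTheory.volume b Real.pi ∧
      (∫ x in b..Real.pi, deriv (fun y => p y * φ y) x * φ x) = 0 := by
  obtain ⟨hC, ⟨x₀, hx₀, hne⟩, -, h0, hπ⟩ := hφ
  have hC1 : ContDiff ℝ 1 φ := hC.of_le (by norm_num)
  have hx0 : 0 < x₀ := lt_of_le_of_ne hx₀.1 (by rintro rfl; exact hne h0)
  have hxπ : x₀ < Real.pi := lt_of_le_of_ne hx₀.2 (by rintro rfl; exact hne hπ)
  have hev : ∀ᶠ x in nhds x₀, φ x ≠ 0 := hC.continuous.continuousAt.eventually_ne hne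
  obtain ⟨ε, hε, hball⟩ := Metric.eventually_nhds_iff.1 hev
  obtain ⟨δ, hδ, hδ'⟩ : ∃ δ > 0, δ < min ε (min x₀ (Real.pi - x₀)) :=
    exists_between (lt_min hε (lt_min hx0 (by linarith)))
  have d1 : δ < ε := lt_of_lt_of_le hδ' (min_le_left _ _)
  have d2 : δ < x₀ := lt_of_lt_of_le hδ' ((min_le_right _ _).trans (min_le_left _ _))
  have d3 : δ < Real.pi - x₀ := lt_of_lt_of_le hδ' ((min_le_right _ _).trans (min_le_right _ _))
  obtain ⟨a, ha⟩ : ∃ a, a = x₀ - δ := ⟨_, rfl⟩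
  obtain ⟨b, hb⟩ : ∃ b, b = x₀ + δ := ⟨_, rfl⟩
  have hnz : ∀ x ∈ Set.Icc a b, φ x ≠ 0 := by
    intro x hx
    apply hball
    rw [Real.dist_eq, abs_lt]
    constructor <;> linarith [hx.1, hx.2]
  have hab : a < b := by linarith
  have ha0 : 0 < a := by linarith
  have hbπ : b < Real.pi := by linarith
  have hna : φ a ≠ 0 := hnz a ⟨le_rfl, hab.le⟩
  have hnb : φ b ≠ 0 := hnz b ⟨hab.le, le_rfl⟩
  obtain ⟨p, hp⟩ : ∃ p : ℝ → ℝ, p = fun x =>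
    (4 / φ a - 3 * φ (min x a) / φ a ^ 2 - 1 / φ a) + (φ (max a (min x b)))⁻¹ +
      (4 / φ b - 3 * φ (max x b) / φ b ^ 2 - 1 / φ b) := ⟨_, rfl⟩
  have ea : 4 / φ a - 3 * φ a / φ a ^ 2 - 1 / φ a = 0 := by field_simp; norm_num
  have eb : 4 / φ b - 3 * φ b / φ b ^ 2 - 1 / φ b = 0 := by field_simp; norm_num
  have p1 : ∀ x ∈ Set.Ioo 0 a, p x = 4 / φ a - 3 * φ x / φ a ^ 2 := by
    intro x hx
    have hx2 := hx.2
    simp only [hp]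
    rw [min_eq_left hx2.le, min_eq_left (by linarith), max_eq_left hx2.le,
      max_eq_right (by linarith), eb]
    ring
  have p2 : ∀ x ∈ Set.Ioo b Real.pi, p x = 4 / φ b - 3 * φ x / φ b ^ 2 := by
    intro x hx
    have hx1 := hx.1
    simp only [hp]
    rw [min_eq_right (by linarith), min_eq_right hx1.le, max_eq_right hab.le,
      max_eq_left hx1.le, ea]
    ring
  have p3 : ∀ x ∈ Set.Icc a b, p x = (φ x)⁻¹ := by
    intro x hx
    simp only [hp]
    rw [min_eq_right hx.1, min_eq_left hx.2, max_eq_right hx.1, max_eq_right hx.2, ea, eb]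
    ring
  obtain ⟨i1, i2⟩ := aux_int φ p hC 0 a (φ a) ha0.le p1
  obtain ⟨j1, j2⟩ := aux_int φ p hC b Real.pi (φ b) hbπ.le p2
  refine ⟨a, b, p, ha0, hab, hbπ, ?_, ⟨x₀, ⟨by linarith, by linarith⟩, ?_⟩, ⟨1, ?_⟩, i1, ?_, j1, ?_⟩
  · obtain ⟨K1, h1⟩ := aux_lip (fun x => 4 / φ a - 3 * φ x / φ a ^ 2 - 1 / φ a) 0 a
      (by apply ContDiff.contDiffOn; fun_prop) (fun x => min x a) (LipschitzWith.id.min_const a)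
      (Set.Icc 0 Real.pi) (fun x hx => ⟨le_min hx.1 ha0.le, min_le_right _ _⟩)
    obtain ⟨K2, h2⟩ := aux_lip (fun x => (φ x)⁻¹) a b
      (hC1.contDiffOn.inv hnz) (fun x => max a (min x b))
      ((LipschitzWith.id.min_const b).const_max a)
      (Set.Icc 0 Real.pi) (fun x hx => ⟨le_max_left _ _, max_le hab.le (min_le_right _ _)⟩)
    obtain ⟨K3, h3⟩ := aux_lip (fun x => 4 / φ b - 3 * φ x / φ b ^ 2 - 1 / φ b) b Real.pi
      (by apply ContDiff.contDiffOn; fun_prop) (fun x => max x b) (LipschitzWith.id.max_const b)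
      (Set.Icc 0 Real.pi) (fun x hx => ⟨le_max_right _ _, max_le hx.2 hbπ.le⟩)
    rw [hp]
    exact ⟨_, (h1.add h2).add h3⟩
  · rw [p3 x₀ ⟨by linarith, by linarith⟩]
    exact inv_ne_zero hne
  · intro x hx
    rw [p3 x hx]
    exact inv_mul_cancel₀ (hnz x hx)
  · rw [i2, h0]
    field_simp
    ring
  · rw [j2, hπ]
    field_simp
    ring
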